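/- Let q = p^m be odd, let k with k ≢ 0 (mod m) and m/gcd(k,m) odd, σ = p^k, d = gcd(k,m), and let a,b,c ∈ F_q be such that x^{σ²+σ+1} + c·x^{σ²+σ} + b·x^{σ²} + a = 0 has no solution x ∈ F_q. Let ∗ be the commutative pre-semifield multiplication on F_q^3 given by the polarization of F, i.e. (x,y,z) ∗ (u,v,w) = (x^σ u + x u^σ + a(y^σ w + v^σ z) + b(x^σ v + y v^σ) + c(x^σ w + u^σ z), a(y^σ v + y v^σ) + z^σ u + x w^σ + b(z^σ v + w^σ y) + c(x^σ v + u^σ y), z^σ w + z w^σ − (x^σ v + u^σ y)). Then the set of F_p-linear maps A : F_q^3 → F_q^3 with the property that for every u ∈ F_q^3 there exists r ∈ F_q^3 such that (A x) ∗ u = x ∗ r for all x ∈ F_q^3, is exactly the set of scalar multiplication maps x ↦ C·x with C ∈ F_{p^d} (the subfield of F_q fixed by σ). Consequently the middle nucleus of the associated semifield is isomorphic to F_{p^d}. -/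

import Mathlib

section Helpers

variable {F K : Type*} [Field F] [Field K] [Algebra F K] [FiniteDimensional F K]

theorem aux_indep (c : (K ≃ₐ[F] K) → K) (h : ∀ x, ∑ g, c g * g x = 0) : ∀ g, c g = 0 := by
  have h1 : LinearIndependent K
      (fun g : K ≃ₐ[F] K => (g : K →ₐ[F] K).toLinearMap) :=
    (linearIndependent_toLinearMap F K K).comp (fun g : K ≃ₐ[F] K => (g : K →ₐ[F] K))
      AlgEquiv.coe_toAlgHom_injective
  rw [Fintype.linearIndependent_iff] at h1
  apply h1 c
  ext x
  simpa using h x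

theorem aux_span [IsGalois F K] (f : K →ₗ[F] K) :
    ∃ c : (K ≃ₐ[F] K) → K, ∀ x, f x = ∑ g, c g * g x := by
  have h1 : LinearIndependent K
      (fun g : K ≃ₐ[F] K => (g : K →ₐ[F] K).toLinearMap) :=
    (linearIndependent_toLinearMap F K K).comp (fun g : K ≃ₐ[F] K => (g : K →ₐ[F] K))
      AlgEquiv.coe_toAlgHom_injective
  have h2 := h1.span_eq_top_of_card_eq_finrank' (by
    rw [Module.finrank_linearMap_self, ← IsGalois.card_aut_eq_finrank, Nat.card_eq_fintype_card])
  have h3 : f ∈ Submodule.span K (Set.range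
      (fun g : K ≃ₐ[F] K => (g : K →ₐ[F] K).toLinearMap)) := by rw [h2]; trivial
  obtain ⟨c, hc⟩ := (Submodule.mem_span_range_iff_exists_fun _).mp h3
  refine ⟨c, fun x => ?_⟩
  rw [← hc]
  simp

open Classical in
theorem aux_col (s : K ≃ₐ[F] K) (f1 f2 f3 : K →ₗ[F] K) (m1 m2 m3 : (K ≃ₐ[F] K) → K)
    (h1 : ∀ x, f1 x = ∑ g, m1 g * g x) (h2 : ∀ x, f2 x = ∑ g, m2 g * g x)
    (h3 : ∀ x, f3 x = ∑ g, m3 g * g x) (l1 l2 l3 r1 r2 r3 S T : K)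
    (h : ∀ x, l1 * s (f1 x) + l2 * s (f2 x) + l3 * s (f3 x)
      + r1 * f1 x + r2 * f2 x + r3 * f3 x = S * s x + T * x) (g : K ≃ₐ[F] K) :
    l1 * s (m1 (s⁻¹ * g)) + l2 * s (m2 (s⁻¹ * g)) + l3 * s (m3 (s⁻¹ * g))
      + r1 * m1 g + r2 * m2 g + r3 * m3 g
      = (if g = s then S else 0) + (if g = 1 then T else 0) := by
  have key : ∀ m : (K ≃ₐ[F] K) → K, ∀ x,
      s (∑ g, m g * g x) = ∑ g, s (m (s⁻¹ * g)) * g x := by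
    intro m x
    rw [map_sum]
    refine Fintype.sum_equiv (Equiv.mulLeft s) _ _ (fun g => ?_)
    simp
  rw [← sub_eq_zero]
  refine aux_indep (fun g => l1 * s (m1 (s⁻¹ * g)) + l2 * s (m2 (s⁻¹ * g))
      + l3 * s (m3 (s⁻¹ * g)) + r1 * m1 g + r2 * m2 g + r3 * m3 g
      - ((if g = s then S else 0) + (if g = 1 then T else 0))) (fun x => ?_) g
  have hx := h x
  rw [h1, h2, h3, key, key, key] at hx
  have e1 : S * s x = ∑ g : K ≃ₐ[F] K, (if g = s then S else 0) * g x := by simp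
  have e2 : T * x = ∑ g : K ≃ₐ[F] K, (if g = 1 then T else 0) * g x := by simp
  rw [e1, e2] at hx
  simp only [Finset.mul_sum, ← Finset.sum_add_distrib] at hx
  rw [← sub_eq_zero, ← Finset.sum_sub_distrib] at hx
  refine Eq.trans ?_ hx
  refine Finset.sum_congr rfl (fun g _ => ?_)
  ring

theorem aux_sep (s : K ≃ₐ[F] K) (hs : s ≠ 1) (α β : K)
    (h : ∀ t, α * t + β * s t = 0) : α = 0 ∧ β = 0 := by
  have h1 := h 1
  simp only [map_one, mul_one] at h1
  have hα : α = 0 := by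
    by_contra hne
    apply hs
    ext t
    have ht := h t
    have hb : β = -α := by linear_combination h1
    rw [hb] at ht
    have : α * (t - s t) = 0 := by linear_combination ht
    rcases mul_eq_zero.mp this with h0 | h0
    · exact absurd h0 hne
    · simpa using (sub_eq_zero.mp h0).symm
  refine ⟨hα, ?_⟩
  linear_combination h1 - hα

theorem aux_vanish (s : K ≃ₐ[F] K) (hs : s ≠ 1) (a b c : K) (ha : a ≠ 0)
    (m1 m2 m3 n1 n2 n3 : K)
    (e1 : ∀ u v w : K, (u + b * v + c * w) * n1 + a * w * n2 + 0 * n3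
      + s u * m1 + b * s v * m2 + (a * s v + c * s u) * m3 = 0)
    (e3 : ∀ u v w : K, -v * n1 + 0 * n2 + w * n3
      + 0 * m1 + -s u * m2 + s w * m3 = 0) :
    (m1 = 0 ∧ m2 = 0 ∧ m3 = 0) ∧ (n1 = 0 ∧ n2 = 0 ∧ n3 = 0) := by
  have m2z : m2 = 0 := by have := e3 1 0 0; simp at this; exact this
  have n1z : n1 = 0 := by have := e3 0 1 0; simp at this; exact this
  obtain ⟨n3z, m3z⟩ := aux_sep s hs n3 m3 (fun t => by
    have := e3 0 0 t; simp at this; linear_combination this)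
  subst m2z n1z n3z m3z
  have m1z : m1 = 0 := by have := e1 1 0 0; simp at this; exact this
  have n2z : n2 = 0 := by have := e1 0 0 1; simp [ha] at this; exact this
  exact ⟨⟨m1z, rfl, rfl⟩, rfl, n2z, rfl⟩

theorem aux_core [IsGalois F K] (s : K ≃ₐ[F] K) (hs : s ≠ 1) (hs2 : s * s ≠ 1)
    (a b c : K) (ha : a ≠ 0) (M : (K × K × K) →ₗ[F] (K × K × K))
    (h : ∀ u v w : K, ∃ r t q : K, ∀ x : K × K × K,
      ((u + b * v + c * w) * s (M x).1 + a * w * s (M x).2.1 + 0 * s (M x).2.2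
        + s u * (M x).1 + b * s v * (M x).2.1 + (a * s v + c * s u) * (M x).2.2
      = (r + b * t + c * q) * s x.1 + a * q * s x.2.1
        + s r * x.1 + b * s t * x.2.1 + (a * s t + c * s r) * x.2.2) ∧
      (c * v * s (M x).1 + a * v * s (M x).2.1 + (u + b * v) * s (M x).2.2
        + s w * (M x).1 + (a * s v + b * s w + c * s u) * (M x).2.1 + 0 * (M x).2.2
      = c * t * s x.1 + a * t * s x.2.1 + (r + b * t) * s x.2.2
        + s q * x.1 + (a * s t + b * s q + c * s r) * x.2.1) ∧
      (-v * s (M x).1 + 0 * s (M x).2.1 + w * s (M x).2.2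
        + 0 * (M x).1 + -s u * (M x).2.1 + s w * (M x).2.2
      = -t * s x.1 + q * s x.2.2 + -s r * x.2.1 + s q * x.2.2)) :
    ∃ C : K, s (s C) = C ∧ ∀ x, M x = C • x := by
  let p1 : (K × K × K) →ₗ[F] K := LinearMap.fst F K (K × K)
  let p2 : (K × K × K) →ₗ[F] K := LinearMap.fst F K K ∘ₗ LinearMap.snd F K (K × K)
  let p3 : (K × K × K) →ₗ[F] K := LinearMap.snd F K K ∘ₗ LinearMap.snd F K (K × K)
  let i1 : K →ₗ[F] (K × K × K) := LinearMap.inl F K (K × K)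
  let i2 : K →ₗ[F] (K × K × K) := LinearMap.inr F K (K × K) ∘ₗ LinearMap.inl F K K
  let i3 : K →ₗ[F] (K × K × K) := LinearMap.inr F K (K × K) ∘ₗ LinearMap.inr F K K
  obtain ⟨m11, h11⟩ := aux_span (p1 ∘ₗ M ∘ₗ i1)
  obtain ⟨m12, h12⟩ := aux_span (p1 ∘ₗ M ∘ₗ i2)
  obtain ⟨m13, h13⟩ := aux_span (p1 ∘ₗ M ∘ₗ i3)
  obtain ⟨m21, h21⟩ := aux_span (p2 ∘ₗ M ∘ₗ i1)
  obtain ⟨m22, h22⟩ := aux_span (p2 ∘ₗ M ∘ₗ i2)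
  obtain ⟨m23, h23⟩ := aux_span (p2 ∘ₗ M ∘ₗ i3)
  obtain ⟨m31, h31⟩ := aux_span (p3 ∘ₗ M ∘ₗ i1)
  obtain ⟨m32, h32⟩ := aux_span (p3 ∘ₗ M ∘ₗ i2)
  obtain ⟨m33, h33⟩ := aux_span (p3 ∘ₗ M ∘ₗ i3)
  choose r t q hr using h
  have c1 := fun u v w => aux_col s _ _ _ m11 m21 m31 h11 h21 h31 _ _ _ _ _ _
    (r u v w + b * t u v w + c * q u v w) (s (r u v w)) (fun x => by
      have := (hr u v w (i1 x)).1
      simp only [i1, LinearMap.inl_apply, Prod.fst_zero, Prod.snd_zero, map_zero, mul_zero, add_zero] at this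
      exact this)
  have c2 := fun u v w => aux_col s _ _ _ m12 m22 m32 h12 h22 h32 _ _ _ _ _ _
    (a * q u v w) (b * s (t u v w)) (fun x => by
      have := (hr u v w (i2 x)).1
      simp only [i2, LinearMap.comp_apply, LinearMap.inl_apply, LinearMap.inr_apply, map_zero, mul_zero, add_zero, zero_add] at this
      exact this)
  have c3 := fun u v w => aux_col s _ _ _ m13 m23 m33 h13 h23 h33 _ _ _ _ _ _
    0 (a * s (t u v w) + c * s (r u v w)) (fun x => by
      have := (hr u v w (i3 x)).1
      simp only [i3, LinearMap.comp_apply, LinearMap.inl_apply, LinearMap.inr_apply, map_zero, mul_zero, add_zero, zero_add] at this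
      exact this.trans (by ring))
  have d1 := fun u v w => aux_col s _ _ _ m11 m21 m31 h11 h21 h31 _ _ _ _ _ _
    (c * t u v w) (s (q u v w)) (fun x => by
      have := (hr u v w (i1 x)).2.1
      simp only [i1, LinearMap.inl_apply, Prod.fst_zero, Prod.snd_zero, map_zero, mul_zero, add_zero] at this
      exact this)
  have d2 := fun u v w => aux_col s _ _ _ m12 m22 m32 h12 h22 h32 _ _ _ _ _ _
    (a * t u v w) (a * s (t u v w) + b * s (q u v w) + c * s (r u v w)) (fun x => by
      have := (hr u v w (i2 x)).2.1
      simp only [i2, LinearMap.comp_apply, LinearMap.inl_apply, LinearMap.inr_apply, map_zero, mul_zero, add_zero, zero_add] at this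
      exact this)
  have d3 := fun u v w => aux_col s _ _ _ m13 m23 m33 h13 h23 h33 _ _ _ _ _ _
    (r u v w + b * t u v w) 0 (fun x => by
      have := (hr u v w (i3 x)).2.1
      simp only [i3, LinearMap.comp_apply, LinearMap.inl_apply, LinearMap.inr_apply, map_zero, mul_zero, add_zero, zero_add] at this
      exact this.trans (by ring))
  have k1 := fun u v w => aux_col s _ _ _ m11 m21 m31 h11 h21 h31 _ _ _ _ _ _
    (-t u v w) 0 (fun x => by
      have := (hr u v w (i1 x)).2.2
      simp only [i1, LinearMap.inl_apply, Prod.fst_zero, Prod.snd_zero, map_zero, mul_zero, add_zero] at this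
      exact this.trans (by ring))
  have k2 := fun u v w => aux_col s _ _ _ m12 m22 m32 h12 h22 h32 _ _ _ _ _ _
    0 (-s (r u v w)) (fun x => by
      have := (hr u v w (i2 x)).2.2
      simp only [i2, LinearMap.comp_apply, LinearMap.inl_apply, LinearMap.inr_apply, map_zero, mul_zero, add_zero, zero_add] at this
      exact this.trans (by ring))
  have k3 := fun u v w => aux_col s _ _ _ m13 m23 m33 h13 h23 h33 _ _ _ _ _ _
    (q u v w) (s (q u v w)) (fun x => by
      have := (hr u v w (i3 x)).2.2
      simp only [i3, LinearMap.comp_apply, LinearMap.inl_apply, LinearMap.inr_apply, map_zero, mul_zero, add_zero, zero_add] at this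
      exact this)
  -- vanishing away from `1` and `s`
  have v1 : ∀ g, g ≠ s → g ≠ 1 → _ := fun g hg hg1 => aux_vanish s hs a b c ha _ _ _ _ _ _
    (fun u v w => by simpa only [if_neg hg, if_neg hg1, add_zero] using c1 u v w g)
    (fun u v w => by simpa only [if_neg hg, if_neg hg1, add_zero] using k1 u v w g)
  have v2 : ∀ g, g ≠ s → g ≠ 1 → _ := fun g hg hg1 => aux_vanish s hs a b c ha _ _ _ _ _ _
    (fun u v w => by simpa only [if_neg hg, if_neg hg1, add_zero] using c2 u v w g)
    (fun u v w => by simpa only [if_neg hg, if_neg hg1, add_zero] using k2 u v w g)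
  have v3 : ∀ g, g ≠ s → g ≠ 1 → _ := fun g hg hg1 => aux_vanish s hs a b c ha _ _ _ _ _ _
    (fun u v w => by simpa only [if_neg hg, if_neg hg1, add_zero] using c3 u v w g)
    (fun u v w => by simpa only [if_neg hg, if_neg hg1, add_zero] using k3 u v w g)
  have hss : s * s ≠ s := by simpa using hs
  have hi : s⁻¹ ≠ s := by
    intro h0; apply hs2; nth_rewrite 1 [← h0]; simp
  have hi1 : s⁻¹ ≠ 1 := by simpa using hs
  -- vanishing of everything at every `g ≠ 1`
  have w1 : ∀ g, g ≠ 1 → m11 g = 0 ∧ m21 g = 0 ∧ m31 g = 0 := by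
    intro g hg
    by_cases hgs : g = s
    · have := (v1 (s * s) hss hs2).2
      simp only [inv_mul_cancel_left, EmbeddingLike.map_eq_zero_iff] at this
      rw [hgs]; exact this
    · exact (v1 g hgs hg).1
  have w2 : ∀ g, g ≠ 1 → m12 g = 0 ∧ m22 g = 0 ∧ m32 g = 0 := by
    intro g hg
    by_cases hgs : g = s
    · have := (v2 (s * s) hss hs2).2
      simp only [inv_mul_cancel_left, EmbeddingLike.map_eq_zero_iff] at this
      rw [hgs]; exact this
    · exact (v2 g hgs hg).1
  have w3 : ∀ g, g ≠ 1 → m13 g = 0 ∧ m23 g = 0 ∧ m33 g = 0 := by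
    intro g hg
    by_cases hgs : g = s
    · have := (v3 (s * s) hss hs2).2
      simp only [inv_mul_cancel_left, EmbeddingLike.map_eq_zero_iff] at this
      rw [hgs]; exact this
    · exact (v3 g hgs hg).1
  obtain ⟨z11, z21, z31⟩ := w1 s hs
  obtain ⟨z12, z22, z32⟩ := w2 s hs
  obtain ⟨z13, z23, z33⟩ := w3 s hs
  -- equations at `g = s`
  have C1 := fun u v w => c1 u v w s
  have C2 := fun u v w => c2 u v w s
  have C3 := fun u v w => c3 u v w s
  have D1 := fun u v w => d1 u v w s
  have D2 := fun u v w => d2 u v w s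
  have D3 := fun u v w => d3 u v w s
  have K1 := fun u v w => k1 u v w s
  have K2 := fun u v w => k2 u v w s
  have K3 := fun u v w => k3 u v w s
  simp only [z11, z21, z31, z12, z22, z32, z13, z23, z33, inv_mul_cancel, if_true, if_neg hs,
    mul_zero, add_zero, zero_mul, zero_add] at C1 C2 C3 D1 D2 D3 K1 K2 K3
  have n13 : m13 1 = 0 := by simpa using C3 1 0 0
  have n23 : m23 1 = 0 := by simpa [n13, ha] using C3 0 0 1
  have n12 : m12 1 = 0 := by simpa using K2 0 1 0
  have n32 : m32 1 = 0 := by simpa using K2 0 0 1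
  simp only [n13, n23, n12, n32, map_zero, mul_zero, zero_add, add_zero] at C1 C2 C3 D1 D2 D3 K1 K2 K3
  have ht : ∀ u v w, t u v w = v * s (m22 1) := fun u v w => by
    have := D2 u v w
    apply mul_left_cancel₀ ha
    linear_combination -this
  have hq : ∀ u v w, q u v w = w * s (m33 1) := fun u v w => (K3 u v w).symm
  have n31 : m31 1 = 0 := by
    have := K1 0 0 1
    simpa [ht] using this
  have n11 : s (m11 1) = s (m22 1) := by
    have := K1 0 1 0
    rw [ht] at this
    rw [n31, map_zero] at this
    linear_combination -this
  have n33 : s (m33 1) = s (m22 1) := by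
    have := C2 0 0 1
    rw [hq] at this
    apply mul_left_cancel₀ ha
    linear_combination -this
  have n21 : m21 1 = 0 := by
    have := D1 0 1 0
    rw [ht, n31, n11] at this
    have h2 : a * s (m21 1) = 0 := by
      rw [map_zero] at this
      linear_combination this
    simpa [ha] using h2
  have hrr : r 1 0 0 = s (m22 1) := by
    have := D3 1 0 0
    rw [ht, n33] at this
    linear_combination -this
  have e11 : m11 1 = m22 1 := s.injective n11
  have e33 : m33 1 = m22 1 := s.injective n33
  refine ⟨m22 1, ?_, ?_⟩
  · have := k2 1 0 0 1
    simp only [mul_one, (w2 s⁻¹ hi1).1, (w2 s⁻¹ hi1).2.1, (w2 s⁻¹ hi1).2.2, n12, n32, hrr,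
      if_neg (Ne.symm hs), if_true, map_zero, map_one, mul_zero, zero_add, add_zero] at this
    linear_combination this
  · have red : ∀ m : (K ≃ₐ[F] K) → K, (∀ g, g ≠ 1 → m g = 0) → ∀ x : K,
        ∑ g, m g * g x = m 1 * x := by
      intro m hm x
      rw [Finset.sum_eq_single 1]
      · simp
      · intro g _ hg
        simp [hm g hg]
      · simp
    intro x
    have hx : x = i1 x.1 + i2 x.2.1 + i3 x.2.2 := by
      simp [i1, i2, i3]
    have f11 := h11 x.1
    have f21 := h21 x.1
    have f31 := h31 x.1
    have f12 := h12 x.2.1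
    have f22 := h22 x.2.1
    have f32 := h32 x.2.1
    have f13 := h13 x.2.2
    have f23 := h23 x.2.2
    have f33 := h33 x.2.2
    rw [red _ (fun g hg => (w1 g hg).1)] at f11
    rw [red _ (fun g hg => (w1 g hg).2.1), n21] at f21
    rw [red _ (fun g hg => (w1 g hg).2.2), n31] at f31
    rw [red _ (fun g hg => (w2 g hg).1), n12] at f12
    rw [red _ (fun g hg => (w2 g hg).2.1)] at f22
    rw [red _ (fun g hg => (w2 g hg).2.2), n32] at f32
    rw [red _ (fun g hg => (w3 g hg).1), n13] at f13
    rw [red _ (fun g hg => (w3 g hg).2.1), n23] at f23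
    rw [red _ (fun g hg => (w3 g hg).2.2)] at f33
    have g1 : p1 (M x) = m22 1 * x.1 := by
      conv_lhs => rw [hx]
      rw [map_add, map_add, map_add, map_add]
      simp only [LinearMap.comp_apply] at f11 f12 f13
      rw [f11, f12, f13, e11]; ring
    have g2 : p2 (M x) = m22 1 * x.2.1 := by
      conv_lhs => rw [hx]
      rw [map_add, map_add, map_add, map_add]
      have f21' : p2 (M (i1 x.1)) = _ := f21
      have f22' : p2 (M (i2 x.2.1)) = _ := f22
      have f23' : p2 (M (i3 x.2.2)) = _ := f23
      rw [f21', f22', f23']; ring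
    have g3 : p3 (M x) = m22 1 * x.2.2 := by
      conv_lhs => rw [hx]
      rw [map_add, map_add, map_add, map_add]
      have f31' : p3 (M (i1 x.1)) = _ := f31
      have f32' : p3 (M (i2 x.2.1)) = _ := f32
      have f33' : p3 (M (i3 x.2.2)) = _ := f33
      rw [f31', f32', f33', e33]; ring
    exact Prod.ext g1 (Prod.ext g2 g3)

end Helpers

/-- for the pre-semifield multiplication `∗` on `F_q^3` given by
the polarization of `F`, the `F_p`-linear (equivalently additive) maps `A` with
`(A x) ∗ u ∈ {x ∗ r : r}` for each `u` (i.e. `∀ u ∃ r, ∀ x, (A x) ∗ u = x ∗ r`)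
are exactly the scalar maps `x ↦ C·x` with `C` in the fixed field `F_{p^d}` of
`σ` (where `d = gcd(k,m)`, `F_{p^d} = {C : C^{p^k} = C}`). Consequently the
middle nucleus is isomorphic to `F_{p^d}`. -/
theorem stmt18 {p m k : ℕ} (hp : p.Prime) (hpodd : Odd p) (hm : 0 < m)
    (hk : ¬ m ∣ k) (hkm : Odd (m / Nat.gcd k m))
    {K : Type*} [Field K] [Fintype K] (hK : Fintype.card K = p ^ m)
    (a b c : K)
    (hnosol : ¬ ∃ x : K, x ^ (p ^ (2 * k) + p ^ k + 1) + c * x ^ (p ^ (2 * k) + p ^ k)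
        + b * x ^ (p ^ (2 * k)) + a = 0)
    (star : K × K × K → K × K × K → K × K × K)
    (hstar : star = fun w u =>
      (w.1 ^ p ^ k * u.1 + w.1 * u.1 ^ p ^ k
          + a * (w.2.1 ^ p ^ k * u.2.2 + u.2.1 ^ p ^ k * w.2.2)
          + b * (w.1 ^ p ^ k * u.2.1 + w.2.1 * u.2.1 ^ p ^ k)
          + c * (w.1 ^ p ^ k * u.2.2 + u.1 ^ p ^ k * w.2.2),
       a * (w.2.1 ^ p ^ k * u.2.1 + w.2.1 * u.2.1 ^ p ^ k)
          + w.2.2 ^ p ^ k * u.1 + w.1 * u.2.2 ^ p ^ k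
          + b * (w.2.2 ^ p ^ k * u.2.1 + u.2.2 ^ p ^ k * w.2.1)
          + c * (w.1 ^ p ^ k * u.2.1 + u.1 ^ p ^ k * w.2.1),
       w.2.2 ^ p ^ k * u.2.2 + w.2.2 * u.2.2 ^ p ^ k
          - (w.1 ^ p ^ k * u.2.1 + u.1 ^ p ^ k * w.2.1))) :
    ∀ M : K × K × K →+ K × K × K,
      (∀ u : K × K × K, ∃ r : K × K × K, ∀ x : K × K × K, star (M x) u = star x r) ↔
      (∃ C : K, C ^ p ^ k = C ∧ ∀ x : K × K × K, M x = C • x) := by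
  intro M
  have hpf : Fact p.Prime := ⟨hp⟩
  have hchar : CharP K p := charP_of_card_eq_prime_pow hK
  letI : Algebra (ZMod p) K := ZMod.algebra K p
  have ha : a ≠ 0 := by
    intro ha
    apply hnosol
    refine ⟨0, ?_⟩
    have h1 : p ^ (2 * k) ≠ 0 := pow_ne_zero _ hp.ne_zero
    have h2 : p ^ (2 * k) + p ^ k ≠ 0 := by omega
    have h3 : p ^ (2 * k) + p ^ k + 1 ≠ 0 := by omega
    rw [zero_pow h1, zero_pow h2, zero_pow h3, ha]
    ring
  let φ : K ≃ₐ[ZMod p] K := FiniteField.frobeniusAlgEquivOfAlgebraic (ZMod p) K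
  have hφ : ∀ n : ℕ, ∀ x, (φ ^ n) x = x ^ p ^ n := by
    intro n
    induction n with
    | zero => intro x; simp
    | succ n ih =>
      intro x
      rw [pow_succ, AlgEquiv.mul_apply, ih]
      have : φ x = x ^ p := by
        change x ^ Fintype.card (ZMod p) = x ^ p
        rw [ZMod.card]
      rw [this, ← pow_mul, pow_succ, mul_comm]
  have hfin : Module.finrank (ZMod p) K = m := by
    have h1 := Module.card_eq_pow_finrank (K := ZMod p) (V := K)
    rw [hK, ZMod.card] at h1
    exact (Nat.pow_right_injective hp.two_le h1).symm
  have hord : orderOf φ = m := by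
    rw [← hfin]; exact FiniteField.orderOf_frobeniusAlgEquivOfAlgebraic (ZMod p) K
  set s : K ≃ₐ[ZMod p] K := φ ^ k with hs_def
  have hsx : ∀ x, x ^ p ^ k = s x := fun x => (hφ k x).symm
  have hs : s ≠ 1 := by
    intro h0
    apply hk
    rw [← hord]
    exact orderOf_dvd_of_pow_eq_one h0
  obtain ⟨j, hj⟩ := hkm
  have hsn : s ^ (2 * j + 1) = 1 := by
    rw [← hj, hs_def, ← pow_mul]
    apply orderOf_dvd_iff_pow_eq_one.mp
    rw [hord]
    obtain ⟨k', hk'⟩ := Nat.gcd_dvd_left k m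
    obtain ⟨m', hm'⟩ := Nat.gcd_dvd_right k m
    have hg : 0 < Nat.gcd k m := Nat.gcd_pos_of_pos_right k hm
    have hq : m / Nat.gcd k m = m' := Nat.div_eq_of_eq_mul_right hg hm'
    rw [hq]
    refine ⟨k', ?_⟩
    calc k * m' = (Nat.gcd k m * k') * m' := by rw [← hk']
      _ = (Nat.gcd k m * m') * k' := by ring
      _ = m * k' := by rw [← hm']
  have hfix : ∀ C, s (s C) = C → s C = C := by
    intro C hC
    have h2 : ∀ i : ℕ, (s ^ (2 * i)) C = C := by
      intro i
      induction i with
      | zero => simp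
      | succ i ih =>
        rw [mul_add, mul_one, pow_add, AlgEquiv.mul_apply, pow_two, AlgEquiv.mul_apply, hC, ih]
    have h3 : (s ^ (2 * j + 1)) C = C := by rw [hsn]; rfl
    rw [pow_succ', AlgEquiv.mul_apply, h2] at h3
    exact h3
  have hs2 : s * s ≠ 1 := by
    intro h0
    apply hs
    ext C
    have : (s * s) C = C := by rw [h0]; rfl
    exact hfix C this
  subst hstar
  simp only [hsx]
  constructor
  · intro h
    let M' : (K × K × K) →ₗ[ZMod p] (K × K × K) := AddMonoidHom.toZModLinearMap p M
    have hM' : ∀ x, M' x = M x := fun x => rfl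
    obtain ⟨C, hC, hMC⟩ := aux_core s hs hs2 a b c ha M' (by
      intro u v w
      obtain ⟨⟨r, t, q⟩, hr⟩ := h (u, v, w)
      refine ⟨r, t, q, fun x => ?_⟩
      have := hr x
      simp only [Prod.mk.injEq] at this
      obtain ⟨e1, e2, e3⟩ := this
      rw [hM']
      refine ⟨?_, ?_, ?_⟩
      · linear_combination e1
      · linear_combination e2
      · linear_combination e3)
    exact ⟨C, hfix C hC, hMC⟩
  · rintro ⟨C, hC, hMC⟩ u
    refine ⟨C • u, fun x => ?_⟩
    rw [hMC]
    simp only [Prod.smul_fst, Prod.smul_snd, smul_eq_mul, map_mul, hC, Prod.mk.injEq]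
    refine ⟨?_, ?_, ?_⟩ <;> ring
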